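/- arXiv:2302.00643 — 4 statements merged into one kernel-verified Lean document; each statement's English description precedes it below -/
import Mathlib

section
/- Let n ≥ 1, k ≥ 1, and let A_1, …, A_k be real symmetric n×n matrices. There exist real numbers c_1, …, c_k such that Σ_{i=1}^k c_i·A_i is positive definite if and only if there is no nonzero positive semidefinite real symmetric n×n matrix X satisfying tr(A_i·X) = 0 for all i = 1, …, k (i.e. the intersection of the closures of the sets A_i^⊥ in the Satake compactification of 𝒫(n) is empty). -/
/-!
The pairing `(A, X) ↦ tr (A X)` reduces on rank-one matrices to the quadratic form:
`tr (A x xᵀ) = xᵀ A x`.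

If `C = ∑ cᵢ Aᵢ` is positive definite and `X` is positive semidefinite, write `X = ∑ vⱼ vⱼᵀ`;
then `tr (C X) = ∑ vⱼᵀ C vⱼ` vanishes only if every `vⱼ` does
(`eq_zero_of_posDef_of_trace_mul_eq_zero`), so no nonzero `X` is orthogonal to all the `Aᵢ`.

Conversely, let `S` be the set of positive semidefinite matrices of trace `1`, and let
`L X = (tr (Aᵢ X))ᵢ`. Since `S` is convex and compact, so is `L S` in `ℝᵏ`, and the hypothesis
says that `0 ∉ L S`. A linear functional `y ↦ ∑ cᵢ yᵢ` separating `0` strictly from `L S` is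
positive on `L (x xᵀ / |x|²)` for every `x ≠ 0`, that is, `∑ cᵢ xᵀ Aᵢ x > 0`.
-/

open Matrix

lemma trace_mul_vecMulVec_self {n : ℕ} (M : Matrix (Fin n) (Fin n) ℝ) (x : Fin n → ℝ) :
    (M * vecMulVec x x).trace = x ⬝ᵥ (M *ᵥ x) := by
  rw [mul_vecMulVec, trace_vecMulVec, dotProduct_comm]

lemma trace_sum_smul_mul {n k : ℕ} (A : Fin k → Matrix (Fin n) (Fin n) ℝ) (c : Fin k → ℝ)
    (X : Matrix (Fin n) (Fin n) ℝ) :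
    ((∑ i, c i • A i) * X).trace = ∑ i, c i * (A i * X).trace := by
  simp [Finset.sum_mul, trace_sum]

lemma eq_zero_of_posDef_of_trace_mul_eq_zero {n : ℕ} {C X : Matrix (Fin n) (Fin n) ℝ}
    (hC : C.PosDef) (hX : X.PosSemidef) (h : (C * X).trace = 0) : X = 0 := by
  obtain ⟨m, v, rfl⟩ := posSemidef_iff_eq_sum_vecMulVec.1 hX
  simp only [star_trivial, Finset.mul_sum, trace_sum, trace_mul_vecMulVec_self] at h ⊢
  have hnn : ∀ j ∈ Finset.univ, 0 ≤ v j ⬝ᵥ (C *ᵥ v j) := fun j _ => by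
    simpa using hC.posSemidef.dotProduct_mulVec_nonneg (v j)
  refine Finset.sum_eq_zero fun j hj => ?_
  have hv : v j = 0 := by
    by_contra hne
    have hpos := hC.dotProduct_mulVec_pos hne
    rw [star_trivial, (Finset.sum_eq_zero_iff_of_nonneg hnn).1 h j hj] at hpos
    exact lt_irrefl _ hpos
  simp [hv]

/-- The linear map `X ↦ (tr (Aᵢ X))ᵢ`. -/
def tracePairing {n k : ℕ} (A : Fin k → Matrix (Fin n) (Fin n) ℝ) :
    Matrix (Fin n) (Fin n) ℝ →ₗ[ℝ] (Fin k → ℝ) where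
  toFun X i := (A i * X).trace
  map_add' X Y := by ext i; simp [mul_add]
  map_smul' r X := by ext i; simp

/-- The spectraplex: positive semidefinite matrices of trace `1`. Its points are the points of the
Satake compactification, normalized within their classes up to positive scalars. -/
def spectraplex (n : ℕ) : Set (Matrix (Fin n) (Fin n) ℝ) :=
  {X | X.PosSemidef ∧ X.trace = 1}

lemma convex_spectraplex (n : ℕ) : Convex ℝ (spectraplex n) := by
  rintro Y ⟨hY, hY'⟩ Z ⟨hZ, hZ'⟩ a b ha hb hab
  exact ⟨(hY.smul ha).add (hZ.smul hb), by simp [hY', hZ', hab]⟩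

lemma isClosed_spectraplex (n : ℕ) : IsClosed (spectraplex n) := by
  have h : spectraplex n = {X : Matrix (Fin n) (Fin n) ℝ | Xᵀ = X} ∩
      (⋂ x : Fin n → ℝ, {X | 0 ≤ x ⬝ᵥ (X *ᵥ x)}) ∩ {X | X.trace = 1} := by
    ext X
    simp [spectraplex, posSemidef_iff_dotProduct_mulVec, IsHermitian,
      conjTranspose_eq_transpose_of_trivial]
  rw [h]
  refine ((isClosed_eq (by fun_prop) (by fun_prop)).inter (isClosed_iInter fun x => ?_)).inter
    (isClosed_eq (by fun_prop) (by fun_prop))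
  exact isClosed_le (by fun_prop) (by fun_prop)

/-- Testing on `eᵢ ± eⱼ` gives `2 |Xᵢⱼ| ≤ Xᵢᵢ + Xⱼⱼ`, and each diagonal entry is at most the
trace. -/
lemma entry_mem_Icc_of_mem_spectraplex {n : ℕ} {X : Matrix (Fin n) (Fin n) ℝ}
    (hX : X ∈ spectraplex n) (i j : Fin n) : X i j ∈ Set.Icc (-1 : ℝ) 1 := by
  obtain ⟨hpsd, htr⟩ := hX
  have hdiag : ∀ l, X l l ≤ 1 := fun l => by
    rw [← htr]
    exact Finset.single_le_sum (f := fun m => X m m) (fun m _ => hpsd.diag_nonneg)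
      (Finset.mem_univ l)
  have hsymm : X j i = X i j := by simpa using hpsd.isHermitian.apply i j
  have hadd := hpsd.dotProduct_mulVec_nonneg (Pi.single i 1 + Pi.single j 1)
  have hsub := hpsd.dotProduct_mulVec_nonneg (Pi.single i 1 - Pi.single j 1)
  simp [mulVec_add, mulVec_sub, add_dotProduct, sub_dotProduct] at hadd hsub
  constructor <;> linarith [hdiag i, hdiag j]

lemma isCompact_spectraplex (n : ℕ) : IsCompact (spectraplex n) :=
  (isCompact_univ_pi fun _ : Fin n => isCompact_univ_pi fun _ : Fin n =>
    isCompact_Icc (a := (-1 : ℝ)) (b := 1)).of_isClosed_subset (isClosed_spectraplex n)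
    fun _ hX i _ j _ => entry_mem_Icc_of_mem_spectraplex hX i j

/-- A functional separating `0` from the image of the spectraplex gives the coefficients. -/
lemma exists_forall_dotProduct_mulVec_pos {n k : ℕ} (A : Fin k → Matrix (Fin n) (Fin n) ℝ)
    (h : ¬∃ X : Matrix (Fin n) (Fin n) ℝ,
      X ≠ 0 ∧ X.PosSemidef ∧ ∀ i, (A i * X).trace = 0) :
    ∃ c : Fin k → ℝ, ∀ x : Fin n → ℝ, x ≠ 0 → 0 < x ⬝ᵥ ((∑ i, c i • A i) *ᵥ x) := by
  have h0 : (0 : Fin k → ℝ) ∉ tracePairing A '' spectraplex n := by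
    rintro ⟨X, ⟨hpsd, htr⟩, hX0⟩
    refine h ⟨X, ?_, hpsd, fun i => congrFun hX0 i⟩
    rintro rfl
    simp at htr
  have hcont : Continuous (tracePairing A) := by
    simp only [tracePairing, LinearMap.coe_mk, AddHom.coe_mk]
    fun_prop
  obtain ⟨f, u, hu, hf⟩ := geometric_hahn_banach_point_closed
    ((convex_spectraplex n).linear_image (tracePairing A))
    ((isCompact_spectraplex n).image hcont).isClosed h0
  rw [map_zero] at hu
  refine ⟨fun i => f (Pi.single i 1), fun x hx => ?_⟩
  have hfy : ∀ y : Fin k → ℝ, f y = ∑ i, f (Pi.single i 1) * y i := fun y => by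
    conv_lhs => rw [pi_eq_sum_univ' y]
    simp [mul_comm]
  have hx' : 0 < x ⬝ᵥ x := by simpa using dotProduct_star_self_pos_iff.2 hx
  have hmem : (x ⬝ᵥ x)⁻¹ • vecMulVec x x ∈ spectraplex n := by
    refine ⟨PosSemidef.smul (by simpa using posSemidef_vecMulVec_self_star x)
      (inv_nonneg.2 hx'.le), ?_⟩
    rw [trace_smul, trace_vecMulVec, smul_eq_mul, inv_mul_cancel₀ hx'.ne']
  have hpos := hu.trans (hf _ (Set.mem_image_of_mem _ hmem))
  rw [map_smul, map_smul, smul_eq_mul, hfy] at hpos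
  rw [← trace_mul_vecMulVec_self, trace_sum_smul_mul]
  exact pos_of_mul_pos_right hpos (inv_nonneg.2 hx'.le)

/-- A collection of symmetric matrices has a positive definite linear
combination iff no nonzero positive semidefinite matrix is trace-orthogonal to all of
them (emptiness of the intersection of the closures in the Satake compactification). -/
theorem definite_combination_iff_empty_satake_intersection
    (n k : ℕ) (hn : 1 ≤ n) (hk : 1 ≤ k)
    (A : Fin k → Matrix (Fin n) (Fin n) ℝ) (hA : ∀ i, (A i).IsSymm) :
    (∃ c : Fin k → ℝ, (∑ i, c i • A i).PosDef) ↔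
      ¬∃ X : Matrix (Fin n) (Fin n) ℝ,
        X ≠ 0 ∧ X.PosSemidef ∧ ∀ i, (A i * X).trace = 0 := by
  constructor
  · rintro ⟨c, hc⟩ ⟨X, hX0, hX, hAX⟩
    refine hX0 (eq_zero_of_posDef_of_trace_mul_eq_zero hc hX ?_)
    simp [trace_sum_smul_mul, hAX]
  · intro h
    obtain ⟨c, hc⟩ := exists_forall_dotProduct_mulVec_pos A h
    refine ⟨c, PosDef.of_dotProduct_mulVec_pos ?_ fun x hx => by simpa using hc x hx⟩
    rw [IsHermitian, conjTranspose_eq_transpose_of_trivial, transpose_sum]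
    exact Finset.sum_congr rfl fun i _ => by rw [transpose_smul, (hA i).eq]
end

section
/- Let n ≥ 1 and let A, B be real symmetric n×n matrices such that A^⊥ and B^⊥ are both nonempty. Then A^⊥ ∩ B^⊥ = ∅ if and only if there exists an invertible Q ∈ GL(n,ℝ) such that at least one of the following holds: (1) QᵀAQ and QᵀBQ are both diagonal matrices and there exist real numbers α, β such that α·QᵀAQ + β·QᵀBQ is a nonzero positive semidefinite matrix; or (2) there exist an integer m ≥ 1, block sizes d_1, …, d_m ∈ {1,2} with d_1 + ⋯ + d_m = n, and a real number λ, such that QᵀAQ and QᵀBQ are simultaneously block-diagonal with diagonal blocks A_1, …, A_m and B_1, …, B_m of sizes d_1, …, d_m respectively, every index i with d_i = 2 satisfies det(A_i − λ·B_i) = 0, and the matrix Qᵀ(A − λB)Q is nonzero and is either positive semidefinite or negative semidefinite. -/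
/-!
The two hyperplanes are disjoint if and only if some linear combination `P = α A + β B` is nonzero
and positive semidefinite. If such a `P` exists, then `tr (P X) > 0` for every positive definite `X`
(`trace_mul_pos`), so `tr (A X)` and `tr (B X)` cannot both vanish. Conversely, disjointness lets the
open cone of positive definite quadratic forms be separated from the subspace
`tr (A X) = tr (B X) = 0`, and the separating functional is a combination of the two traces
(`exists_posSemidef_combination`). Both normal forms of the statement exhibit such a `P`, up to
congruence.

It remains to bring the pencil to normal form when `P` is given. As `B^⊥` is nonempty, `α ≠ 0`, so
that `A` is a combination of `P` and `B`, and it suffices to split `P` and `B` simultaneously into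
blocks of size at most `2`, with `P` degenerate on the blocks of size `2`
(`blockSplits_of_nonneg`). Thus the second normal form, which allows `1 × 1` blocks, is always
attained.
-/

open Matrix

/-! ### Simultaneous block splitting of two symmetric forms, one of them semidefinite -/

section Forms

variable {V : Type*} [AddCommGroup V] [Module ℝ V]

/-- The forms `B` and `C` are simultaneously block diagonal in some basis, with blocks of size
`1` or `2`, every block of size `2` containing a basis vector in the radical of the restriction of
`C` to that block. The basis is indexed by pairs (block, position in the block). -/
def BlockSplits (B C : V →ₗ[ℝ] V →ₗ[ℝ] ℝ) : Prop :=
  ∃ (ι : Type) (_ : Fintype ι) (d : ι → ℕ) (b : Module.Basis ((i : ι) × Fin (d i)) ℝ V),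
    (∀ i j a c, i ≠ j → B (b ⟨i, a⟩) (b ⟨j, c⟩) = 0 ∧ C (b ⟨i, a⟩) (b ⟨j, c⟩) = 0) ∧
    ∀ i, d i = 1 ∨ d i = 2 ∧ ∃ a, ∀ c, C (b ⟨i, a⟩) (b ⟨i, c⟩) = 0

/-- Splitting off one block: the vectors `v` span the new block, the functionals `g` are dual to
them, and the common kernel of `g` is the complement, assumed orthogonal to `v` for both forms. A
splitting of that complement then extends to the whole space. -/
theorem BlockSplits.extend {B C : V →ₗ[ℝ] V →ₗ[ℝ] ℝ}
    (hB : ∀ x y, B x y = B y x) (hC : ∀ x y, C x y = C y x)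
    {d : ℕ} (v : Fin d → V) (g : Fin d → V →ₗ[ℝ] ℝ)
    (hg : ∀ i j, g i (v j) = if i = j then 1 else 0)
    (horth : ∀ a x, (∀ j, g j x = 0) → B (v a) x = 0 ∧ C (v a) x = 0)
    (hd : d = 1 ∨ d = 2 ∧ ∃ a, C (v a) = 0)
    (hW : BlockSplits (B.domRestrict₁₂ (LinearMap.ker (LinearMap.pi g)) (LinearMap.ker (LinearMap.pi g)))
      (C.domRestrict₁₂ (LinearMap.ker (LinearMap.pi g)) (LinearMap.ker (LinearMap.pi g)))) :
    BlockSplits B C := by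
  set W := LinearMap.ker (LinearMap.pi g) with hWdef
  obtain ⟨ι, _, d', b', h1, h2⟩ := hW
  have hmem : ∀ x : V, x ∈ W ↔ ∀ j, g j x = 0 := by
    intro x; simp [hWdef, funext_iff]
  have hF : ∀ (i) (c : Fin d → ℝ), g i (∑ a, c a • v a) = c i := by
    intro i c; simp [hg]
  -- the decomposition `V = span v ⊕ W`
  let F : ((Fin d → ℝ) × W) →ₗ[ℝ] V :=
    (Fintype.linearCombination ℝ v).coprod W.subtype
  have hFa : ∀ p, F p = ∑ a, p.1 a • v a + p.2 := fun p => by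
    simp [F, Fintype.linearCombination_apply]
  have hinj : Function.Injective F := by
    rw [← LinearMap.ker_eq_bot, LinearMap.ker_eq_bot']
    rintro ⟨c, w⟩ h
    rw [hFa] at h
    have hc : c = 0 := by
      funext i
      have := congrArg (g i) h
      rw [map_add, hF, (hmem _).1 w.2 i] at this
      simpa using this
    subst hc
    simpa using h
  have hsurj : Function.Surjective F := by
    intro x
    refine ⟨⟨fun i => g i x, ⟨x - ∑ a, g a x • v a, (hmem _).2 fun j => ?_⟩⟩, ?_⟩
    · rw [map_sub, hF, sub_self]
    · rw [hFa]; simp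
  let E := LinearEquiv.ofBijective F ⟨hinj, hsurj⟩
  have hE : ∀ p, E p = ∑ a, p.1 a • v a + p.2 := hFa
  let e : (Fin d ⊕ ((i : ι) × Fin (d' i))) ≃ ((o : Option ι) × Fin (o.elim d d')) :=
    { toFun := Sum.elim (fun a => ⟨none, a⟩) (fun x => ⟨some x.1, x.2⟩)
      invFun := fun x => match x with
        | ⟨none, a⟩ => Sum.inl a
        | ⟨some i, a⟩ => Sum.inr ⟨i, a⟩
      left_inv := by rintro (a | ⟨i, a⟩) <;> rfl
      right_inv := by rintro ⟨_ | i, a⟩ <;> rfl }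
  let b := (((Pi.basisFun ℝ (Fin d)).prod b').map E).reindex e
  have hb0 : ∀ a : Fin d, b ⟨none, a⟩ = v a := by
    intro a
    have : e.symm ⟨none, a⟩ = Sum.inl a := rfl
    simp [b, this, hE, Pi.single_apply]
  have hb1 : ∀ i (a : Fin (d' i)), b ⟨some i, a⟩ = (b' ⟨i, a⟩ : V) := by
    intro i a
    have : e.symm ⟨some i, a⟩ = Sum.inr ⟨i, a⟩ := rfl
    simp [b, this, hE]
  have ho : ∀ a i (c : Fin (d' i)), B (v a) (b' ⟨i, c⟩ : V) = 0 ∧ C (v a) (b' ⟨i, c⟩ : V) = 0 :=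
    fun a i c => horth a _ ((hmem _).1 (b' ⟨i, c⟩).2)
  refine ⟨Option ι, inferInstance, fun o => o.elim d d', b, ?_, ?_⟩
  · rintro (_ | i) (_ | j) a c hij <;> beta_reduce
    · exact absurd rfl hij
    · exact hb0 a ▸ hb1 j c ▸ ho a j c
    · rw [hB, hC]; exact hb0 c ▸ hb1 i a ▸ ho c i a
    · exact hb1 i a ▸ hb1 j c ▸ h1 i j a c (fun h => hij (congrArg some h))
  · rintro (_ | i)
    · refine hd.imp id fun h => ⟨h.1, ?_⟩
      obtain ⟨-, a, ha⟩ := h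
      refine ⟨a, fun c => ?_⟩
      rw [hb0, ha, LinearMap.zero_apply]
    · refine (h2 i).imp id fun h => ⟨h.1, ?_⟩
      obtain ⟨-, a, ha⟩ := h
      refine ⟨a, fun c => ?_⟩
      exact hb1 i a ▸ hb1 i c ▸ ha c

/-- For a positive semidefinite form, isotropic vectors lie in the radical. -/
theorem apply_eq_zero_of_isotropic {C : V →ₗ[ℝ] V →ₗ[ℝ] ℝ} (hC : ∀ x y, C x y = C y x)
    (hpos : ∀ x, 0 ≤ C x x) {x : V} (hx : C x x = 0) : C x = 0 := by
  ext y
  by_contra h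
  simp only [LinearMap.zero_apply] at h
  obtain ⟨t, ht⟩ : ∃ t : ℝ, t * C x y = -(C y y + 1) / 2 :=
    ⟨-(C y y + 1) / 2 / C x y, div_mul_cancel₀ _ h⟩
  have := hpos (y + t • x)
  simp only [map_add, map_smul, LinearMap.add_apply, LinearMap.smul_apply, smul_eq_mul, hx,
    hC y x] at this
  linarith

/-- With `C` as inner product, `B` is represented by a self-adjoint operator, which has a real
eigenvalue. -/
theorem exists_relative_eigenvector [FiniteDimensional ℝ V] [Nontrivial V]
    {B C : V →ₗ[ℝ] V →ₗ[ℝ] ℝ}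
    (hB : ∀ x y, B x y = B y x) (hC : ∀ x y, C x y = C y x)
    (hpos : ∀ x, 0 ≤ C x x) (hdef : ∀ x, C x x = 0 → x = 0) :
    ∃ v : V, v ≠ 0 ∧ ∃ μ : ℝ, B v = μ • C v := by
  -- the inner product space structure on `V` given by `C`
  let core : InnerProductSpace.Core ℝ V :=
    { inner := fun x y => C x y
      conj_inner_symm := fun x y => by simpa using hC y x
      re_inner_nonneg := fun x => by simpa using hpos x
      add_left := fun x y z => by simp
      smul_left := fun x y r => by simp
      definite := hdef }
  let : NormedAddCommGroup V := core.toNormedAddCommGroup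
  let : InnerProductSpace ℝ V := InnerProductSpace.ofCore core.toCore
  have hin : ∀ x y : V, inner ℝ x y = C x y := fun _ _ => rfl
  have hinj : Function.Injective C := by
    rw [← LinearMap.ker_eq_bot, LinearMap.ker_eq_bot']
    intro x hx
    exact hdef x (by rw [hx]; rfl)
  let e : V ≃ₗ[ℝ] (V →ₗ[ℝ] ℝ) :=
    LinearMap.linearEquivOfInjective C hinj (Subspace.dual_finrank_eq (K := ℝ) (V := V)).symm
  let T : V →ₗ[ℝ] V := e.symm.toLinearMap ∘ₗ B
  have hT : ∀ x, C (T x) = B x := fun x => e.apply_symm_apply (B x)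
  have hsym : T.IsSymmetric := by
    intro x y
    rw [hin, hin, hC x, hT, hT, hB]
  obtain ⟨μ, hμ⟩ : ∃ μ, Module.End.HasEigenvalue T μ :=
    ⟨_, hsym.hasEigenvalue_iSup_of_finiteDimensional⟩
  obtain ⟨v, hv⟩ := hμ.exists_hasEigenvector
  refine ⟨v, hv.2, μ, ?_⟩
  rw [← hT, hv.apply_eq_smul, map_smul]

/-- A symmetric form maps onto the annihilator of its radical. -/
theorem exists_apply_eq_of_vanish_on_ker [FiniteDimensional ℝ V]
    {C : V →ₗ[ℝ] V →ₗ[ℝ] ℝ} (hC : ∀ x y, C x y = C y x) (f : V →ₗ[ℝ] ℝ)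
    (hf : ∀ x, C x = 0 → f x = 0) : ∃ u, C u = f := by
  have h := LinearMap.dualAnnihilator_ker_eq_range_flip (B := C)
  have hfl : C.flip = C := by ext x y; exact hC y x
  rw [hfl] at h
  have : f ∈ (LinearMap.ker C).dualAnnihilator := by
    rw [Submodule.mem_dualAnnihilator]
    exact fun w hw => hf w hw
  rw [h] at this
  exact this

/-- Induction on the dimension, splitting off one block at a time. A line suffices if `C` is
definite (a relative eigenvector), if some vector of `ker C` is not `B`-isotropic, or if `ker C` and
`ker B` meet nontrivially. Otherwise `B` vanishes on `ker C`; for `k ≠ 0` in `ker C` the functional `B k` equals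
`C u` for some `u`, and after correcting `u` along `k` the plane spanned by `k` and `u` is
`B`-hyperbolic, with a `B`-orthogonal complement that is also `C`-orthogonal to it. -/
theorem blockSplits_of_nonneg (N : ℕ) : ∀ {V : Type*} [AddCommGroup V] [Module ℝ V]
    [FiniteDimensional ℝ V] (B C : V →ₗ[ℝ] V →ₗ[ℝ] ℝ),
    Module.finrank ℝ V = N →
    (∀ x y, B x y = B y x) → (∀ x y, C x y = C y x) → (∀ x, 0 ≤ C x x) →
    BlockSplits B C := by
  induction N using Nat.strong_induction_on with
  | _ N ih =>
  intro V _ _ _ B C hN hB hC hpos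
  have step : ∀ {d : ℕ} (v : Fin d → V) (g : Fin d → V →ₗ[ℝ] ℝ),
      (∀ i j, g i (v j) = if i = j then 1 else 0) →
      (∀ a x, (∀ j, g j x = 0) → B (v a) x = 0 ∧ C (v a) x = 0) →
      (d = 1 ∨ d = 2 ∧ ∃ a, C (v a) = 0) → BlockSplits B C := by
    intro d v g hg ho hd
    refine BlockSplits.extend hB hC v g hg ho hd (ih _ ?_ _ _ rfl (fun x y => hB x y)
      (fun x y => hC x y) (fun x => hpos x))
    rw [← hN]
    refine Submodule.finrank_lt (lt_top_iff_ne_top.2 fun h => ?_).ne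
    have hd0 : 0 < d := by omega
    have : v ⟨0, hd0⟩ ∈ LinearMap.ker (LinearMap.pi g) := h ▸ Submodule.mem_top
    have := congrFun (LinearMap.mem_ker.1 this) ⟨0, hd0⟩
    rw [LinearMap.pi_apply, hg] at this
    simp at this
  have step1 : ∀ (v : V) (g : V →ₗ[ℝ] ℝ), g v ≠ 0 →
      (∀ x, g x = 0 → B v x = 0 ∧ C v x = 0) → BlockSplits B C := by
    intro v g hgv ho
    refine step (d := 1) (fun _ => v) (fun _ => (g v)⁻¹ • g) ?_ ?_ (Or.inl rfl)
    · intro i j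
      simp [Subsingleton.elim i j, hgv]
    · intro _ x hx
      refine ho x ?_
      simpa [hgv] using hx 0
  rcases subsingleton_or_nontrivial V with hV | hV
  · exact ⟨PEmpty, inferInstance, fun _ => 0, Module.Basis.empty V, fun i => i.elim, fun i => i.elim⟩
  by_cases hdef : ∀ x, C x = 0 → x = 0
  · obtain ⟨v, hv, μ, hμ⟩ := exists_relative_eigenvector hB hC hpos
      (fun x hx => hdef x (apply_eq_zero_of_isotropic hC hpos hx))
    refine step1 v (C v) (fun h => hv (hdef v (apply_eq_zero_of_isotropic hC hpos h))) ?_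
    intro x hx
    exact ⟨by rw [hμ, LinearMap.smul_apply, hx, smul_zero], hx⟩
  by_cases h1 : ∃ v, C v = 0 ∧ B v v ≠ 0
  · obtain ⟨v, hv, hvv⟩ := h1
    exact step1 v (B v) hvv fun x hx => ⟨hx, by rw [hv]; rfl⟩
  push Not at hdef h1
  obtain ⟨k, hk, hk0⟩ := hdef
  by_cases hBk : B k = 0
  · obtain ⟨g, hg⟩ : ∃ g : V →ₗ[ℝ] ℝ, g k ≠ 0 := by
      by_contra! h
      exact hk0 ((Module.forall_dual_apply_eq_zero_iff ℝ k).1 h)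
    exact step1 k g hg fun x _ => ⟨by rw [hBk]; rfl, by rw [hk]; rfl⟩
  -- `B` vanishes identically on `ker C`, by polarization
  have hBker : ∀ x, C x = 0 → B k x = 0 := by
    intro x hx
    have h := h1 (k + x) (by rw [map_add, hk, hx, add_zero])
    simp only [map_add, LinearMap.add_apply, h1 k hk, h1 x hx, hB x k] at h
    linarith
  obtain ⟨u₀, hu₀⟩ := exists_apply_eq_of_vanish_on_ker hC (B k) hBker
  have hc : B k u₀ ≠ 0 := by
    rw [← hu₀]
    intro h
    exact hBk (hu₀ ▸ apply_eq_zero_of_isotropic hC hpos h)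
  set c := B k u₀ with hcdef
  -- correct `u₀` along `k` to make it `B`-isotropic
  obtain ⟨u, hu, huu, hku⟩ : ∃ u, C u = B k ∧ B u u = 0 ∧ B k u = c := by
    refine ⟨u₀ + (-(B u₀ u₀) / (2 * c)) • k, ?_, ?_, ?_⟩
    · rw [map_add, map_smul, hk, smul_zero, add_zero, hu₀]
    · simp only [map_add, map_smul, LinearMap.add_apply, LinearMap.smul_apply, smul_eq_mul,
        h1 k hk, hB u₀ k, ← hcdef]
      field_simp
      ring
    · simp [h1 k hk, hcdef]
  refine step (d := 2) ![k, u] ![c⁻¹ • B u, c⁻¹ • B k] ?_ ?_ (Or.inr ⟨rfl, 0, hk⟩)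
  · intro i j
    fin_cases i <;> fin_cases j <;> simp [h1 k hk, huu, hku, hB u k, hc]
  · intro a x hx
    have hx0 : B u x = 0 := by simpa [hc] using hx 0
    have hx1 : B k x = 0 := by simpa [hc] using hx 1
    fin_cases a
    · exact ⟨hx1, by simp [hk]⟩
    · exact ⟨hx0, by simpa [hu] using hx1⟩

end Forms

/-! ### Separation in the space of matrices and the passage to congruence -/

section Matrices

variable {n : ℕ}

theorem trace_mul_pos {P X : Matrix (Fin n) (Fin n) ℝ} (hP : P.PosSemidef) (hP0 : P ≠ 0)
    (hX : X.PosDef) : 0 < (P * X).trace := by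
  obtain ⟨m, v, rfl⟩ := Matrix.posSemidef_iff_eq_sum_vecMulVec.mp hP
  have hterm : ∀ i, (vecMulVec (v i) (star (v i)) * X).trace = star (v i) ⬝ᵥ X *ᵥ v i := by
    intro i
    rw [vecMulVec_mul, trace_vecMulVec, dotProduct_mulVec, dotProduct_comm]
  rw [Finset.sum_mul, trace_sum]
  simp only [hterm]
  obtain ⟨i, hi⟩ : ∃ i, v i ≠ 0 := by
    by_contra! h
    exact hP0 (by simp [h])
  exact Finset.sum_pos' (fun j _ => hX.posSemidef.dotProduct_mulVec_nonneg _)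
    ⟨i, Finset.mem_univ _, hX.dotProduct_mulVec_pos hi⟩

/-- Every ray of positive definite matrices meets the hypersurface `det = 1`. -/
theorem exists_det_one (hn : 1 ≤ n) {Y : Matrix (Fin n) (Fin n) ℝ} (hY : Y.PosDef) :
    ∃ c : ℝ, (c • Y).PosDef ∧ (c • Y).det = 1 := by
  have hdet := hY.det_pos
  refine ⟨Y.det ^ (-(1 / n : ℝ)), hY.smul (Real.rpow_pos_of_pos hdet _), ?_⟩
  rw [det_smul, Fintype.card_fin, ← Real.rpow_natCast, ← Real.rpow_mul hdet.le]
  have : (n : ℝ) ≠ 0 := by positivity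
  rw [neg_mul, one_div_mul_cancel this, Real.rpow_neg_one, inv_mul_cancel₀ hdet.ne']

/-- Symmetry is deliberately not required of `X`: dropping
it makes this set open in the full matrix space. -/
theorem isOpen_pos_quadratic :
    IsOpen {X : Matrix (Fin n) (Fin n) ℝ | ∀ x ≠ 0, 0 < x ⬝ᵥ X *ᵥ x} := by
  have hset : {X : Matrix (Fin n) (Fin n) ℝ | ∀ x ≠ 0, 0 < x ⬝ᵥ X *ᵥ x} =
      {X | ∀ x ∈ Metric.sphere (0 : Fin n → ℝ) 1, 0 < x ⬝ᵥ X *ᵥ x} := by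
    ext X
    refine ⟨fun h x hx => h x (ne_zero_of_mem_unit_sphere ⟨x, hx⟩), fun h x hx => ?_⟩
    have hnx : ‖x‖ ≠ 0 := norm_ne_zero_iff.2 hx
    have := h (‖x‖⁻¹ • x) (by simp [norm_smul, hnx])
    rw [mulVec_smul, smul_dotProduct, dotProduct_smul, smul_eq_mul, smul_eq_mul] at this
    have hp : 0 < ‖x‖⁻¹ := by positivity
    exact pos_of_mul_pos_right (pos_of_mul_pos_right this hp.le) hp.le
  rw [hset, isOpen_iff_mem_nhds]
  intro X hX
  refine (isCompact_sphere (0 : Fin n → ℝ) 1).eventually_forall_of_forall_eventually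
    (P := fun X x => 0 < x ⬝ᵥ X *ᵥ x) fun x hx => ?_
  have hc : Continuous fun z : Matrix (Fin n) (Fin n) ℝ × (Fin n → ℝ) => z.2 ⬝ᵥ z.1 *ᵥ z.2 := by
    fun_prop
  exact hc.continuousAt.eventually_const_lt (hX x hx)

/-- Hahn–Banach separation of the open cone of matrices with positive definite quadratic form from
the subspace where `tr (A X)` and `tr (B X)` both vanish. -/
theorem exists_posSemidef_combination (hn : 1 ≤ n) {A B : Matrix (Fin n) (Fin n) ℝ}
    (hA : A.IsSymm) (hB : B.IsSymm)
    (hdisj : ¬∃ X : Matrix (Fin n) (Fin n) ℝ,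
      X.PosDef ∧ X.det = 1 ∧ (A * X).trace = 0 ∧ (B * X).trace = 0) :
    ∃ α β : ℝ, α • A + β • B ≠ 0 ∧ (α • A + β • B).PosSemidef := by
  let U : Set (Matrix (Fin n) (Fin n) ℝ) := {X | ∀ x ≠ 0, 0 < x ⬝ᵥ X *ᵥ x}
  let tr : Matrix (Fin n) (Fin n) ℝ → Matrix (Fin n) (Fin n) ℝ →ₗ[ℝ] ℝ := fun M =>
    traceLinearMap (Fin n) ℝ ℝ ∘ₗ LinearMap.mulLeft ℝ M
  have htr : ∀ M X, tr M X = (M * X).trace := fun _ _ => rfl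
  let L : Submodule ℝ (Matrix (Fin n) (Fin n) ℝ) := LinearMap.ker (tr A) ⊓ LinearMap.ker (tr B)
  have hUconv : Convex ℝ U := by
    intro X hX Y hY a b ha hb hab x hx
    have h1 := hX x hx
    have h2 := hY x hx
    rw [add_mulVec, dotProduct_add, smul_mulVec, smul_mulVec, dotProduct_smul, dotProduct_smul,
      smul_eq_mul, smul_eq_mul]
    rcases ha.eq_or_lt with rfl | ha
    · obtain rfl : b = 1 := by linarith
      simpa using h2
    · positivity
  -- the symmetric part of a point of `U ∩ L`, rescaled, would lie on both hyperplanes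
  have hUL : Disjoint U (L : Set _) := by
    rw [Set.disjoint_left]
    rintro X hX ⟨hXA, hXB⟩
    have hsymtr : ∀ M : Matrix (Fin n) (Fin n) ℝ, M.IsSymm → (M * X).trace = 0 →
        (M * (X + Xᵀ)).trace = 0 := by
      intro M hM h
      have h' : (M * Xᵀ).trace = 0 := by
        rw [← trace_transpose, transpose_mul, transpose_transpose, hM.eq, trace_mul_comm, h]
      rw [mul_add, trace_add, h, h', add_zero]
    have hY : (X + Xᵀ).PosDef := by
      refine PosDef.of_dotProduct_mulVec_pos ?_ fun {x} hx => ?_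
      · rw [IsHermitian, conjTranspose_eq_transpose_of_trivial, transpose_add, transpose_transpose,
          add_comm]
      · have h := hX x hx
        have h' : x ⬝ᵥ Xᵀ *ᵥ x = x ⬝ᵥ X *ᵥ x := by
          rw [mulVec_transpose, dotProduct_comm, dotProduct_mulVec]
        rw [star_trivial, add_mulVec, dotProduct_add, h']
        linarith
    obtain ⟨c, hc, hdet⟩ := exists_det_one hn hY
    refine hdisj ⟨_, hc, hdet, ?_, ?_⟩
    · rw [mul_smul_comm, trace_smul, hsymtr A hA hXA, smul_zero]
    · rw [mul_smul_comm, trace_smul, hsymtr B hB hXB, smul_zero]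
  obtain ⟨f, u, hfU, hfL⟩ := geometric_hahn_banach_open hUconv isOpen_pos_quadratic L.convex hUL
  have hu : u ≤ 0 := by simpa using hfL 0 L.zero_mem
  -- a linear functional bounded below on a subspace vanishes there
  have hf0 : ∀ X ∈ L, f X = 0 := by
    intro X hX
    by_contra h
    have := hfL (((u - 1) / f X) • X) (L.smul_mem _ hX)
    rw [map_smul, smul_eq_mul, div_mul_cancel₀ _ h] at this
    linarith
  have hspan : (f : Matrix (Fin n) (Fin n) ℝ →ₗ[ℝ] ℝ) ∈
      Submodule.span ℝ (Set.range ![tr A, tr B]) := by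
    refine mem_span_of_iInf_ker_le_ker fun X hX => ?_
    rw [Submodule.mem_iInf] at hX
    exact hf0 X ⟨hX 0, hX 1⟩
  obtain ⟨α, β, hf⟩ : ∃ α β : ℝ, ∀ X, f X = α * (A * X).trace + β * (B * X).trace := by
    rw [Matrix.range_cons_cons_empty, Submodule.mem_span_pair] at hspan
    obtain ⟨α, β, h⟩ := hspan
    exact ⟨α, β, fun X => by simpa [htr] using (LinearMap.congr_fun h X).symm⟩
  have hpos : ∀ X ∈ U, 0 < (((-α) • A + (-β) • B) * X).trace := by
    intro X hX
    have := hfU X hX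
    rw [hf] at this
    rw [add_mul, trace_add, smul_mul_assoc, smul_mul_assoc, trace_smul, trace_smul, smul_eq_mul,
      smul_eq_mul]
    linarith
  have hone : ∀ x : Fin n → ℝ, x ≠ 0 → 0 < x ⬝ᵥ x := fun x hx => by
    simpa using dotProduct_star_self_pos_iff.2 hx
  refine ⟨-α, -β, fun h => ?_, PosSemidef.of_dotProduct_mulVec_nonneg ?_ fun x => ?_⟩
  · have := hpos 1 (fun x hx => by simpa using hone x hx)
    rw [h] at this
    simp at this
  · rw [IsHermitian, conjTranspose_eq_transpose_of_trivial]
    exact ((hA.smul _).add (hB.smul _)).eq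
  · -- test against the positive definite perturbations `x xᵀ + ε` of `x xᵀ`
    set P := (-α) • A + (-β) • B
    have key : ∀ ε : ℝ, 0 < ε → 0 < x ⬝ᵥ P *ᵥ x + ε * P.trace := by
      intro ε hε
      have := hpos (vecMulVec x x + ε • 1) fun y hy => by
        have h1 := hone y hy
        have h2 : y ⬝ᵥ vecMulVec x x *ᵥ y = (y ⬝ᵥ x) ^ 2 := by
          rw [vecMulVec_mulVec, op_smul_eq_smul, dotProduct_smul, smul_eq_mul, dotProduct_comm x y,
            sq]
        rw [add_mulVec, dotProduct_add, h2, smul_mulVec, one_mulVec, dotProduct_smul, smul_eq_mul]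
        positivity
      rw [mul_add, trace_add, mul_smul_comm, mul_one, trace_smul, smul_eq_mul, mul_vecMulVec,
        trace_vecMulVec, dotProduct_comm] at this
      exact this
    rw [star_trivial]
    by_contra! hneg
    have h := key (-(x ⬝ᵥ P *ᵥ x) / (2 * (|P.trace| + 1))) (by
      have : 0 < -(x ⬝ᵥ P *ᵥ x) := by linarith
      positivity)
    have h3 : -(x ⬝ᵥ P *ᵥ x) / (2 * (|P.trace| + 1)) * P.trace ≤ -(x ⬝ᵥ P *ᵥ x) / 2 := by
      rw [div_mul_eq_mul_div, div_le_div_iff₀ (by positivity) (by positivity)]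
      nlinarith [le_abs_self P.trace]
    linarith

/-- The block splitting of `B` and `P = α A + β B`, written in matrix terms with
`lam = -β / α`, for which `A - lam B = α⁻¹ P`. -/
theorem block_form_of_posSemidef (hn : 1 ≤ n) {A B : Matrix (Fin n) (Fin n) ℝ} (hB : B.IsSymm)
    {α β : ℝ} (hα : α ≠ 0) (hP0 : α • A + β • B ≠ 0) (hP : (α • A + β • B).PosSemidef) :
    ∃ Q : Matrix (Fin n) (Fin n) ℝ, IsUnit Q.det ∧
      ∃ (m : ℕ), 1 ≤ m ∧
        ∃ (d : Fin m → ℕ), (∀ i, d i = 1 ∨ d i = 2) ∧ (∑ i, d i) = n ∧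
          ∃ (lam : ℝ) (Ab Bb : (i : Fin m) → Matrix (Fin (d i)) (Fin (d i)) ℝ)
            (e : ((i : Fin m) × Fin (d i)) ≃ Fin n),
            Qᵀ * A * Q = Matrix.reindex e e (Matrix.blockDiagonal' Ab) ∧
            Qᵀ * B * Q = Matrix.reindex e e (Matrix.blockDiagonal' Bb) ∧
            (∀ i, d i = 2 → (Ab i - lam • Bb i).det = 0) ∧
            Qᵀ * (A - lam • B) * Q ≠ 0 ∧
            ((Qᵀ * (A - lam • B) * Q).PosSemidef ∨
              (-(Qᵀ * (A - lam • B) * Q)).PosSemidef) := by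
  set P := α • A + β • B with hPdef
  have hAP : A - (-(β / α)) • B = α⁻¹ • P := by
    rw [hPdef, smul_add, smul_smul, smul_smul, inv_mul_cancel₀ hα, one_smul, neg_smul, sub_neg_eq_add,
      div_eq_inv_mul]
  have hPs : P.IsSymm := by
    have := hP.isHermitian
    rwa [IsHermitian, conjTranspose_eq_transpose_of_trivial] at this
  have hsymm : ∀ M : Matrix (Fin n) (Fin n) ℝ, M.IsSymm → ∀ x y, toBilin' M x y = toBilin' M y x := by
    intro M hM x y
    rw [toBilin'_apply', toBilin'_apply', dotProduct_comm, ← vecMul_transpose, hM.eq,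
      dotProduct_mulVec]
  obtain ⟨ι, _, d, b, hoff, hd⟩ := blockSplits_of_nonneg n (toBilin' B) (toBilin' P)
    (by simp) (hsymm B hB) (hsymm P hPs)
    (fun x => by rw [toBilin'_apply']; simpa using hP.dotProduct_mulVec_nonneg x)
  have hcard : Fintype.card ((i : ι) × Fin (d i)) = n := by
    rw [← Module.finrank_eq_card_basis b]; simp
  let σ : Fin (Fintype.card ι) ≃ ι := (Fintype.equivFin ι).symm
  let e₀ : ((i : Fin (Fintype.card ι)) × Fin (d (σ i))) ≃ ((i : ι) × Fin (d i)) :=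
    Equiv.sigmaCongrLeft (β := fun i => Fin (d i)) σ
  let φ : ((i : ι) × Fin (d i)) ≃ Fin n := Fintype.equivFinOfCardEq hcard
  let e := e₀.trans φ
  let b' := b.reindex φ
  have hb' : ∀ i a, b' (e ⟨i, a⟩) = b ⟨σ i, a⟩ := by
    intro i a
    simp [b', e, e₀, Equiv.sigmaCongrLeft]
  let Q : Matrix (Fin n) (Fin n) ℝ := (Pi.basisFun ℝ (Fin n)).toMatrix b'
  have hQdet : IsUnit Q.det := by
    have : Invertible Q := (Pi.basisFun ℝ (Fin n)).invertibleToMatrix b'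
    exact isUnit_det_of_invertible Q
  have hQ : ∀ (M : Matrix (Fin n) (Fin n) ℝ) j k, (Qᵀ * M * Q) j k = toBilin' M (b' j) (b' k) := by
    intro M j k
    rw [mul_mul_apply, toBilin'_apply']
    rfl
  have hblock : ∀ M : Matrix (Fin n) (Fin n) ℝ,
      (∀ i j a c, i ≠ j → toBilin' M (b ⟨i, a⟩) (b ⟨j, c⟩) = 0) →
      Qᵀ * M * Q = Matrix.reindex e e (Matrix.blockDiagonal'
        fun i => Matrix.of fun a c => toBilin' M (b ⟨σ i, a⟩) (b ⟨σ i, c⟩)) := by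
    intro M hM
    ext j k
    obtain ⟨⟨i, a⟩, rfl⟩ := e.surjective j
    obtain ⟨⟨i', c⟩, rfl⟩ := e.surjective k
    rw [hQ, hb', hb', reindex_apply, submatrix_apply, e.symm_apply_apply, e.symm_apply_apply]
    by_cases h : i = i'
    · subst h
      rw [blockDiagonal'_apply_eq]
      rfl
    · rw [blockDiagonal'_apply_ne _ _ _ h]
      exact hM _ _ a c fun h' => h (σ.injective h')
  have hAeq : ∀ x y, toBilin' A x y - (-(β / α)) * toBilin' B x y = α⁻¹ * toBilin' P x y := by
    intro x y
    have := congrArg (fun M => toBilin' M x y) hAP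
    simpa only [map_sub, map_smul, LinearMap.sub_apply, LinearMap.smul_apply, smul_eq_mul] using this
  have hm : 1 ≤ Fintype.card ι := by
    by_contra! h
    have : IsEmpty ι := Fintype.card_eq_zero_iff.1 (by omega)
    rw [Fintype.card_eq_zero] at hcard
    omega
  have hQU : IsUnit Q := (isUnit_iff_isUnit_det Q).2 hQdet
  have hconj : ∀ M : Matrix (Fin n) (Fin n) ℝ, (Qᵀ * M * Q).PosSemidef ↔ M.PosSemidef := by
    intro M
    have := IsUnit.posSemidef_star_left_conjugate_iff (x := M) hQU
    rwa [star_eq_conjTranspose, conjTranspose_eq_transpose_of_trivial] at this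
  refine ⟨Q, hQdet, Fintype.card ι, hm, fun i => d (σ i),
    fun i => (hd (σ i)).imp id And.left, ?_, -(β / α), _, _, e,
    hblock A ?_, hblock B (fun i j a c h => (hoff i j a c h).1), ?_, ?_, ?_⟩
  · rw [Equiv.sum_comp σ d, ← hcard]; simp
  · intro i j a c h
    have h1 := hAeq (b ⟨i, a⟩) (b ⟨j, c⟩)
    rw [(hoff i j a c h).1, (hoff i j a c h).2] at h1
    simpa using h1
  · intro i (hi : d (σ i) = 2)
    obtain ⟨-, a, ha⟩ := (hd (σ i)).resolve_left (by omega)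
    refine det_eq_zero_of_row_eq_zero a fun c => ?_
    have h1 := hAeq (b ⟨σ i, a⟩) (b ⟨σ i, c⟩)
    rw [ha c, mul_zero] at h1
    exact h1
  · rw [hAP]
    intro h
    have h0 : (Qᵀ * P * Q) = 0 := by
      rw [mul_smul_comm, smul_mul_assoc] at h
      exact (smul_eq_zero.1 h).resolve_left (inv_ne_zero hα)
    have hQt : IsUnit Qᵀ := (isUnit_iff_isUnit_det _).2 (by rwa [det_transpose])
    rw [hQU.mul_left_eq_zero, hQt.mul_right_eq_zero] at h0
    exact hP0 h0
  · rw [← neg_mul, ← mul_neg, hconj, hconj, hAP, ← neg_smul]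
    rcases lt_or_gt_of_ne hα with h | h
    · exact Or.inr (hP.smul (neg_nonneg.2 (inv_nonpos.2 h.le)))
    · exact Or.inl (hP.smul (inv_nonneg.2 h.le))

end Matrices

/-- Characterization of pairs of symmetric matrices with disjoint
hyperplanes `A^⊥`, `B^⊥` in `𝒫(n)`, via a congruence transformation bringing the pencil
either to diagonal semi-definite form, or to block-diagonal form with blocks of size at
most 2 sharing a common generalized eigenvalue `λ` with `A - λB` semi-definite. -/
theorem disjoint_hyperplanes_iff_congruent_normal_form
    (n : ℕ) (hn : 1 ≤ n) (A B : Matrix (Fin n) (Fin n) ℝ)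
    (hA : A.IsSymm) (hB : B.IsSymm)
    (hAne : ∃ X : Matrix (Fin n) (Fin n) ℝ,
      X.PosDef ∧ X.det = 1 ∧ (A * X).trace = 0)
    (hBne : ∃ X : Matrix (Fin n) (Fin n) ℝ,
      X.PosDef ∧ X.det = 1 ∧ (B * X).trace = 0) :
    (¬∃ X : Matrix (Fin n) (Fin n) ℝ,
        X.PosDef ∧ X.det = 1 ∧ (A * X).trace = 0 ∧ (B * X).trace = 0) ↔
      ∃ Q : Matrix (Fin n) (Fin n) ℝ, IsUnit Q.det ∧
        (((Qᵀ * A * Q).IsDiag ∧ (Qᵀ * B * Q).IsDiag ∧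
            ∃ α β : ℝ, α • (Qᵀ * A * Q) + β • (Qᵀ * B * Q) ≠ 0 ∧
              (α • (Qᵀ * A * Q) + β • (Qᵀ * B * Q)).PosSemidef) ∨
          (∃ (m : ℕ), 1 ≤ m ∧
            ∃ (d : Fin m → ℕ), (∀ i, d i = 1 ∨ d i = 2) ∧ (∑ i, d i) = n ∧
              ∃ (lam : ℝ) (Ab Bb : (i : Fin m) → Matrix (Fin (d i)) (Fin (d i)) ℝ)
                (e : ((i : Fin m) × Fin (d i)) ≃ Fin n),
                Qᵀ * A * Q = Matrix.reindex e e (Matrix.blockDiagonal' Ab) ∧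
                Qᵀ * B * Q = Matrix.reindex e e (Matrix.blockDiagonal' Bb) ∧
                (∀ i, d i = 2 → (Ab i - lam • Bb i).det = 0) ∧
                Qᵀ * (A - lam • B) * Q ≠ 0 ∧
                ((Qᵀ * (A - lam • B) * Q).PosSemidef ∨
                  (-(Qᵀ * (A - lam • B) * Q)).PosSemidef))) := by
  have hobst : ∀ Q : Matrix (Fin n) (Fin n) ℝ, IsUnit Q.det → ∀ α β : ℝ,
      Qᵀ * (α • A + β • B) * Q ≠ 0 → (Qᵀ * (α • A + β • B) * Q).PosSemidef →
      ¬∃ X : Matrix (Fin n) (Fin n) ℝ,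
        X.PosDef ∧ X.det = 1 ∧ (A * X).trace = 0 ∧ (B * X).trace = 0 := by
    rintro Q hQ α β hne hpsd ⟨X, hX, -, hXA, hXB⟩
    have hiff := IsUnit.posSemidef_star_left_conjugate_iff (x := α • A + β • B)
      ((isUnit_iff_isUnit_det Q).2 hQ)
    rw [star_eq_conjTranspose, conjTranspose_eq_transpose_of_trivial] at hiff
    have hpos := trace_mul_pos (hiff.1 hpsd) (fun h => hne (by rw [h, mul_zero, zero_mul])) hX
    rw [add_mul, trace_add, smul_mul_assoc, smul_mul_assoc, trace_smul, trace_smul, hXA, hXB,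
      smul_zero, smul_zero, add_zero] at hpos
    exact hpos.false
  constructor
  · intro hdisj
    obtain ⟨α, β, hne, hpsd⟩ := exists_posSemidef_combination hn hA hB hdisj
    have hα : α ≠ 0 := by
      -- otherwise `β • B` is semidefinite and nonzero, so `B^⊥` would be empty
      rintro rfl
      obtain ⟨X, hX, -, hXB⟩ := hBne
      have hpos := trace_mul_pos hpsd hne hX
      rw [zero_smul, zero_add, smul_mul_assoc, trace_smul, hXB, smul_zero] at hpos
      exact hpos.false
    obtain ⟨Q, hQ, h⟩ := block_form_of_posSemidef hn hB hα hne hpsd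
    exact ⟨Q, hQ, Or.inr h⟩
  · rintro ⟨Q, hQ, ⟨-, -, α, β, hne, hpsd⟩ | ⟨m, -, d, -, -, lam, Ab, Bb, e, -, -, -, hne, hpsd⟩⟩
    · have heq : α • (Qᵀ * A * Q) + β • (Qᵀ * B * Q) = Qᵀ * (α • A + β • B) * Q := by
        simp only [mul_add, add_mul, mul_smul_comm, smul_mul_assoc]
      rw [heq] at hne hpsd
      exact hobst Q hQ α β hne hpsd
    · rcases hpsd with hpsd | hpsd
      · have heq : A - lam • B = (1 : ℝ) • A + (-lam) • B := by
          rw [one_smul, neg_smul, sub_eq_add_neg]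
        rw [heq] at hne hpsd
        exact hobst Q hQ _ _ hne hpsd
      · have heq : -(Qᵀ * (A - lam • B) * Q) = Qᵀ * ((-1 : ℝ) • A + lam • B) * Q := by
          rw [← neg_mul, ← mul_neg, neg_sub, neg_one_smul, neg_add_eq_sub]
        rw [← neg_ne_zero, heq] at hne
        rw [heq] at hpsd
        exact hobst Q hQ _ _ hne hpsd
end

section
/- Let A and B be real symmetric n×n matrices with B invertible, and let λ ∈ ℝ be such that every complex root of the polynomial det(A − z·B) equals λ (i.e. λ is the only generalized eigenvalue of the pencil (A,B)). Set C = A − λ·B. Then for every real s > 0 and every real t there exists g ∈ GL(n,ℝ) with det(g) > 0 such that gᵀ·C·g = C and gᵀ·B·g = s·B + t·C. -/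
/-!
Put `C = A - λB` and `N = B⁻¹C`; the hypothesis on the pencil says exactly that `N` is nilpotent,
and `N` is self-adjoint for the bilinear form `B`.

The key is the case `t = 0`, for which `g` is the exponential of `log s • X`, where `X` satisfies
`Xᵀ B = B (1 - X)` and `Xᵀ C = -C X`. In terms of the `B`-adjoint `X* = B⁻¹ Xᵀ B` this means
`X + X* = 1` and `[X, N] = N`. A solution `X₀` of `[X₀, N] = N` exists because, by duality for the
trace form, the range of `[·, N]` is the orthogonal complement of the centralizer of `N`, and
`tr (Z N) = 0` for `Z` commuting with the nilpotent `N` (`exists_commutator_eq_self`). Since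
`1 - X₀*` solves the same equation, the average `X = (X₀ + 1 - X₀*) / 2` satisfies both conditions
(`exists_scaling`). The determinant of an exponential is positive, being a nonzero square.

For general `t`, compose two scalings that fix `C`: one doubling `B + tC` (also invertible with
`(B + tC)⁻¹C` nilpotent), which sends `B` to `2B + tC`, and one multiplying `B` by `s / 2`.
-/

open Matrix

open NormedSpace in
lemma matrix_det_exp_pos {n : ℕ} (X : Matrix (Fin n) (Fin n) ℝ) : 0 < (exp X).det := by
  have h : exp X = exp ((1 / 2 : ℝ) • X) * exp ((1 / 2 : ℝ) • X) := by
    rw [← Matrix.exp_add_of_commute _ _ (Commute.refl _), ← add_smul]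
    norm_num
  have hu := (Matrix.isUnit_iff_isUnit_det _).1 (Matrix.isUnit_exp ((1 / 2 : ℝ) • X))
  rw [h, det_mul]
  exact mul_self_pos.2 hu.ne_zero

open NormedSpace in
lemma matrix_exp_intertwine {n : ℕ} {P X Y : Matrix (Fin n) (Fin n) ℝ} (h : P * X = Y * P) :
    P * exp X = exp Y * P := by
  -- a local norm is needed only to apply the Banach-algebra lemma
  let _ : NormedRing (Matrix (Fin n) (Fin n) ℝ) := Matrix.linftyOpNormedRing
  let _ : NormedAlgebra ℝ (Matrix (Fin n) (Fin n) ℝ) := Matrix.linftyOpNormedAlgebra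
  let _ : NormedAlgebra ℚ (Matrix (Fin n) (Fin n) ℝ) := NormedAlgebra.restrictScalars ℚ ℝ _
  exact SemiconjBy.exp_right (show SemiconjBy P X Y from h)

lemma exists_trace_repr {n : ℕ} (φ : Matrix (Fin n) (Fin n) ℝ →ₗ[ℝ] ℝ) :
    ∃ Z : Matrix (Fin n) (Fin n) ℝ, ∀ M, φ M = (Z * M).trace := by
  refine ⟨Matrix.of fun i j => φ (Matrix.single j i 1), fun M => ?_⟩
  conv_lhs => rw [Matrix.matrix_eq_sum_single M]
  simp only [map_sum, Matrix.trace, Matrix.diag, Matrix.mul_apply, Matrix.of_apply]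
  rw [Finset.sum_comm]
  refine Finset.sum_congr rfl fun j _ => Finset.sum_congr rfl fun i _ => ?_
  have : Matrix.single i j (M i j) = M i j • Matrix.single i j (1 : ℝ) := by simp
  rw [this, map_smul, smul_eq_mul, mul_comm]

/-- A nilpotent matrix is the value on itself of an inner derivation; otherwise some functional
`tr (Z ·)` would kill all `[X, N]`, so that `Z` commutes with `N`, but not `N`. -/
lemma exists_commutator_eq_self {n : ℕ} {N : Matrix (Fin n) (Fin n) ℝ} (hN : IsNilpotent N) :
    ∃ X : Matrix (Fin n) (Fin n) ℝ, X * N - N * X = N := by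
  let D : Matrix (Fin n) (Fin n) ℝ →ₗ[ℝ] Matrix (Fin n) (Fin n) ℝ :=
    LinearMap.mulRight ℝ N - LinearMap.mulLeft ℝ N
  by_contra! hcon
  have hmem : N ∉ LinearMap.range D := by
    rintro ⟨X, hX⟩
    exact hcon X hX
  obtain ⟨φ, hφN, hφ⟩ := Submodule.exists_le_ker_of_notMem hmem
  obtain ⟨Z, hZ⟩ := exists_trace_repr φ
  have hcomm : Commute Z N := by
    rw [commute_iff_eq, Matrix.ext_iff_trace_mul_right]
    intro X
    have h0 : φ (X * N - N * X) = 0 := hφ ⟨X, rfl⟩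
    rw [hZ, mul_sub, trace_sub, ← mul_assoc, trace_mul_comm, ← mul_assoc, ← mul_assoc] at h0
    linarith
  apply hφN
  rw [hZ]
  exact (Matrix.isNilpotent_trace_of_isNilpotent (hcomm.isNilpotent_mul_left hN)).eq_zero

open NormedSpace in
lemma exists_scaling {n : ℕ} {B N : Matrix (Fin n) (Fin n) ℝ} (hB : B.IsSymm)
    (hBu : IsUnit B.det) (hN : IsNilpotent N) (hBN : (B * N).IsSymm) {s : ℝ} (hs : 0 < s) :
    ∃ g : Matrix (Fin n) (Fin n) ℝ, 0 < g.det ∧ gᵀ * (B * N) * g = B * N ∧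
      gᵀ * B * g = s • B := by
  obtain ⟨X₀, hX₀⟩ := exists_commutator_eq_self hN
  have hNB : Nᵀ * B = B * N := by
    have := hBN.eq
    rwa [transpose_mul, hB.eq] at this
  have hBB : B * B⁻¹ = 1 := mul_nonsing_inv B hBu
  have hBB' : B⁻¹ * B = 1 := nonsing_inv_mul B hBu
  have hNBi : N * B⁻¹ = B⁻¹ * Nᵀ := by
    calc N * B⁻¹ = B⁻¹ * (B * N) * B⁻¹ := by rw [← mul_assoc, hBB', one_mul]
      _ = B⁻¹ * Nᵀ := by rw [← hNB, mul_assoc, mul_assoc, hBB, mul_one]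
  -- the `B`-adjoint of `X₀`
  obtain ⟨S, hS⟩ : ∃ S, S = B⁻¹ * X₀ᵀ * B := ⟨_, rfl⟩
  have hBS : B * S = X₀ᵀ * B := by rw [hS, ← mul_assoc, ← mul_assoc, hBB, one_mul]
  have hSN : N * S - S * N = N := by
    have h1 : N * S = B⁻¹ * (Nᵀ * X₀ᵀ) * B := by
      rw [hS, ← mul_assoc, ← mul_assoc, hNBi]; simp only [mul_assoc]
    have h2 : S * N = B⁻¹ * (X₀ᵀ * Nᵀ) * B := by
      rw [hS]; simp only [mul_assoc]; rw [hNB]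
    have h3 : Nᵀ * X₀ᵀ - X₀ᵀ * Nᵀ = Nᵀ := by
      rw [← transpose_mul, ← transpose_mul, ← transpose_sub, hX₀]
    rw [h1, h2, ← sub_mul, ← mul_sub, h3, mul_assoc, hNB, ← mul_assoc, hBB', one_mul]
  obtain ⟨X, hX⟩ : ∃ X, X = (1 / 2 : ℝ) • (X₀ + 1 - S) := ⟨_, rfl⟩
  have hXN : X * N = N + N * X := by
    have h : (X₀ + 1 - S) * N = (2 : ℝ) • N + N * (X₀ + 1 - S) := by
      have h₁ : X₀ * N = N + N * X₀ := eq_add_of_sub_eq hX₀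
      have h₂ : S * N = N * S - N := by nth_rw 3 [← hSN]; abel
      rw [sub_mul, add_mul, mul_sub, mul_add, one_mul, mul_one, h₁, h₂]
      module
    rw [hX, smul_mul_assoc, h, smul_add, smul_smul, mul_smul_comm]
    norm_num
  have hXB : Xᵀ * B = B * (1 - X) := by
    have hST : Sᵀ * B = B * X₀ := by
      have := congrArg transpose hBS
      rwa [transpose_mul, transpose_mul, transpose_transpose, hB.eq] at this
    rw [hX, transpose_smul, transpose_sub, transpose_add, transpose_one, smul_mul_assoc, sub_mul,
      add_mul, hST, mul_sub, mul_smul_comm, mul_sub, mul_add, hBS, one_mul, mul_one]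
    module
  have hXC : Xᵀ * (B * N) = (B * N) * (-X) := by
    rw [← mul_assoc, hXB, mul_assoc, sub_mul, hXN, one_mul, mul_assoc]
    noncomm_ring
  have key : ∀ {P Y : Matrix (Fin n) (Fin n) ℝ}, Xᵀ * P = P * Y →
      (exp (Real.log s • X))ᵀ * P = P * exp (Real.log s • Y) := by
    intro P Y h
    rw [← Matrix.exp_transpose, transpose_smul]
    refine (matrix_exp_intertwine ?_).symm
    rw [mul_smul_comm, smul_mul_assoc, h]
  refine ⟨exp (Real.log s • X), matrix_det_exp_pos _, ?_, ?_⟩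
  · rw [key hXC, mul_assoc, ← Matrix.exp_add_of_commute]
    · simp
    · exact ((Commute.refl X).neg_left.smul_left _).smul_right _
  · rw [key hXB, mul_assoc, ← Matrix.exp_add_of_commute]
    · have : Real.log s • (1 - X) + Real.log s • X = diagonal fun _ => Real.log s := by
        rw [← smul_add, sub_add_cancel, smul_one_eq_diagonal]
      rw [this, Matrix.exp_diagonal]
      have h2 : exp (fun _ : Fin n => Real.log s) = fun _ => s := by
        funext i
        rw [Pi.coe_exp,  ← Real.exp_eq_exp_ℝ, Real.exp_log hs]
      rw [h2, ← smul_one_eq_diagonal, mul_smul_comm, mul_one]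
    · exact ((((Commute.one_left X).sub_left (Commute.refl X))).smul_left _).smul_right _

lemma isNilpotent_of_complex_charpoly_roots {n : ℕ} {N : Matrix (Fin n) (Fin n) ℝ}
    (h : ∀ z : ℂ, (N.map Complex.ofReal).charpoly.IsRoot z → z = 0) : IsNilpotent N := by
  set M : Matrix (Fin n) (Fin n) ℂ := N.map Complex.ofReal with hM
  have hroots : M.charpoly.roots = Multiset.replicate M.charpoly.roots.card 0 :=
    Multiset.eq_replicate_card.2 fun z hz => h z (Polynomial.isRoot_of_mem_roots hz)
  have hp := (IsAlgClosed.splits M.charpoly).eq_prod_roots_of_monic (charpoly_monic M)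
  rw [hroots] at hp
  have hc := aeval_self_charpoly M
  rw [hp] at hc
  simp only [Multiset.map_replicate, Multiset.prod_replicate, map_zero, sub_zero, map_pow,
    Polynomial.aeval_X] at hc
  have hMn : IsNilpotent ((Complex.ofRealHom.mapMatrix : _ →+* Matrix (Fin n) (Fin n) ℂ) N) :=
    ⟨_, hc⟩
  exact (IsNilpotent.map_iff (Matrix.map_injective Complex.ofReal_injective)).1 hMn

/-- If the regular symmetric pencil `(A,B)` (with `B` invertible) has the
single generalized eigenvalue `λ`, and `C = A - λB`, then for every `s > 0` and `t ∈ ℝ`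
there exists `g` with `det g > 0`, `gᵀ C g = C` and `gᵀ B g = s·B + t·C`. -/
theorem single_eigenvalue_pencil_congruence
    (n : ℕ) (A B : Matrix (Fin n) (Fin n) ℝ) (hA : A.IsSymm) (hB : B.IsSymm)
    (hBinv : IsUnit B.det) (lam : ℝ)
    (heig : ∀ z : ℂ,
      ((A.map (Complex.ofReal)) - z • (B.map (Complex.ofReal))).det = 0 →
        z = (lam : ℂ)) :
    ∀ s : ℝ, 0 < s → ∀ t : ℝ,
      ∃ g : Matrix (Fin n) (Fin n) ℝ, 0 < g.det ∧
        gᵀ * (A - lam • B) * g = A - lam • B ∧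
        gᵀ * B * g = s • B + t • (A - lam • B) := by
  intro s hs t
  obtain ⟨C, hC⟩ : ∃ C, C = A - lam • B := ⟨_, rfl⟩
  have hCs : C.IsSymm := by rw [hC]; exact hA.sub (hB.smul lam)
  obtain ⟨N, hNdef⟩ : ∃ N, N = B⁻¹ * C := ⟨_, rfl⟩
  have hBN : B * N = C := by rw [hNdef, ← mul_assoc, mul_nonsing_inv B hBinv, one_mul]
  have hN : IsNilpotent N := by
    refine isNilpotent_of_complex_charpoly_roots fun z hz => ?_
    -- `A - (λ + z) B = B (N - z)` over `ℂ`, so an eigenvalue `z` of `N` gives `λ + z = λ`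
    have hmap : B.map Complex.ofReal * N.map Complex.ofReal =
        A.map Complex.ofReal - (lam : ℂ) • B.map Complex.ofReal := by
      have h := congrArg (Complex.ofRealHom.mapMatrix (m := Fin n)) (hBN.trans hC)
      rw [map_mul, map_sub] at h
      refine h.trans ?_
      ext i j
      simp
    have hdet : (A.map Complex.ofReal - ((lam : ℂ) + z) • B.map Complex.ofReal).det = 0 := by
      have e : A.map Complex.ofReal - ((lam : ℂ) + z) • B.map Complex.ofReal =
          -(B.map Complex.ofReal * (scalar (Fin n) z - N.map Complex.ofReal)) := by
        rw [mul_sub, hmap, scalar_apply, ← smul_one_eq_diagonal, mul_smul_comm, mul_one]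
        module
      rw [Polynomial.IsRoot.def, eval_charpoly] at hz
      rw [e, det_neg, det_mul, hz, mul_zero, mul_zero]
    simpa using heig _ hdet
  rw [← hC]
  -- the shifted form `B + tC = B (1 + tN)`
  have htN : IsNilpotent (t • N) := hN.smul t
  have hU : IsUnit (1 + t • N) := htN.isUnit_one_add
  have hUd := (Matrix.isUnit_iff_isUnit_det _).1 hU
  have hB' : B + t • C = B * (1 + t • N) := by
    rw [mul_add, mul_one, mul_smul_comm, hBN]
  have hB'N : (B + t • C) * ((1 + t • N)⁻¹ * N) = C := by
    rw [hB', mul_assoc, ← mul_assoc (1 + t • N), mul_nonsing_inv _ hUd, one_mul, hBN]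
  have hN' : IsNilpotent ((1 + t • N)⁻¹ * N) := by
    refine Commute.isNilpotent_mul_left ?_ hN
    have hc : Commute (1 + t • N) N :=
      (Commute.one_left N).add_left ((Commute.refl N).smul_left t)
    rw [commute_iff_eq]
    calc (1 + t • N)⁻¹ * N = (1 + t • N)⁻¹ * (N * (1 + t • N)) * (1 + t • N)⁻¹ := by
          rw [mul_assoc, mul_assoc, mul_nonsing_inv _ hUd, mul_one]
      _ = N * (1 + t • N)⁻¹ := by
          rw [← hc.eq, ← mul_assoc, nonsing_inv_mul _ hUd, one_mul]
  obtain ⟨g₁, hd₁, hC₁, hB₁⟩ := exists_scaling (hB.add (hCs.smul t))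
    (by rw [hB', det_mul]; exact hBinv.mul hUd) hN' (by rw [hB'N]; exact hCs) (two_pos (α := ℝ))
  obtain ⟨g₂, hd₂, hC₂, hB₂⟩ := exists_scaling hB hBinv hN (by rw [hBN]; exact hCs) (half_pos hs)
  rw [hB'N] at hC₁
  rw [hBN] at hC₂
  have hB₁' : g₁ᵀ * B * g₁ = (2 : ℝ) • B + t • C := by
    rw [mul_add, add_mul, mul_smul_comm, smul_mul_assoc, hC₁] at hB₁
    rw [eq_sub_of_add_eq hB₁]
    module
  refine ⟨g₁ * g₂, by rw [det_mul]; exact mul_pos hd₁ hd₂, ?_, ?_⟩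
  · calc (g₁ * g₂)ᵀ * C * (g₁ * g₂) = g₂ᵀ * (g₁ᵀ * C * g₁) * g₂ := by
          rw [transpose_mul]; simp only [mul_assoc]
      _ = C := by rw [hC₁, hC₂]
  · calc (g₁ * g₂)ᵀ * B * (g₁ * g₂) = g₂ᵀ * (g₁ᵀ * B * g₁) * g₂ := by
          rw [transpose_mul]; simp only [mul_assoc]
      _ = s • B + t • C := by
          rw [hB₁', mul_add, add_mul, mul_smul_comm, smul_mul_assoc, mul_smul_comm,
            smul_mul_assoc, hB₂, hC₂]
          module
end

section
/- Let n ≥ 1, k ≥ 1, and let A_1, …, A_k ∈ SL(2n,ℝ). Assume that for each i all complex eigenvalues of A_i are real, positive, and different from 1, and let V_i⁺ (respectively V_i⁻) ⊆ ℝ^{2n} be the sum of the generalized eigenspaces of A_iᵀ (i.e. of the kernels of (A_iᵀ − λ·I)^{2n}) over the real eigenvalues λ > 1 (respectively 0 < λ < 1). Assume dim V_i⁺ = dim V_i⁻ = n for every i, and that any two distinct subspaces among V_1⁺, V_1⁻, …, V_k⁺, V_k⁻ intersect only in {0}. Then there exists a positive integer M such that for all integers m_1⁺, m_1⁻, …,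 m_k⁺, m_k⁻ ≥ M, the 2k bisectors Bis(I, A_i^{m_i⁺}.I) and Bis(I, A_i^{−m_i⁻}.I) (i = 1, …, k) in 𝒫(2n) are pairwise disjoint; that is, for any two distinct labels (i, ε) ≠ (j, δ) with ε, δ ∈ {+, −}, there is no W ∈ 𝒫(2n) satisfying both s(A_i^{ε m_i^ε}.I, W) = s(I, W) and s(A_j^{δ m_j^δ}.I, W) = s(I, W). -/
/-!
Write `S = Aᵀ` for the sign `+` and `S = (Aᵀ)⁻¹` for the sign `-`. If `B = A ^ (± m)`, then
`(Bᵀ * B)⁻¹ = Cᵀ * C` with `C = S⁻¹ ^ m`, so for `W = R * Rᵀ` the bisector equation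
`s(Bᵀ * B, W) = s(I, W)` says exactly that `‖C * R‖ = ‖R‖` in the Frobenius norm.

For each label let `U` be the subspace `V i b` and `U'` the one with the opposite sign. They are
complementary and `S`-invariant, so the projection `P` onto `U'` along `U` commutes with `S`.
On `U'` all eigenvalues of `S` lie in `(0, 1)`, hence `S ^ m * P → 0`
(`tendsto_pow_mulVec_of_mem_iSup`, `exists_commuting_matrix`), while `P = (S ^ m * P) * S⁻¹ ^ m`.

For two distinct labels the kernels of `P₁` and `P₂` meet trivially, so `Q₁ * P₁ + Q₂ * P₂ = 1`
for some `Q₁, Q₂` (`exists_combination_eq_one`). Therefore `1 = E₁ * C₁ + E₂ * C₂`, where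
`E₁ = Q₁ * (S₁ ^ a * P₁)` and `E₂ = Q₂ * (S₂ ^ b * P₂)` have norm `< 1 / 2` once `a` and `b` are
large. A common point `W = R * Rᵀ` of the two bisectors would give
`‖R‖ ≤ ‖E₁‖ * ‖C₁ * R‖ + ‖E₂‖ * ‖C₂ * R‖ = (‖E₁‖ + ‖E₂‖) * ‖R‖ < ‖R‖` (`no_common_point`).
There are finitely many pairs of labels, so a single threshold serves them all.
-/

open Matrix Filter Topology

theorem tendsto_choose_mul_pow {l : ℝ} (h0 : 0 < l) (h1 : l < 1) (j : ℕ) :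
    Tendsto (fun m : ℕ => (m.choose j : ℝ) * l ^ (m - j)) atTop (𝓝 0) := by
  rw [← tendsto_add_atTop_iff_nat j]
  have h := (summable_choose_mul_geometric_of_norm_lt_one (R := ℝ) j (r := l)
    (by rwa [Real.norm_of_nonneg h0.le])).tendsto_atTop_zero
  simpa using h

/-- Powers of `T` tend to zero on a generalized eigenspace with eigenvalue `l ∈ (0, 1)`: by the
binomial formula `T ^ m *ᵥ v` is a sum of `N` fixed vectors with coefficients
`m.choose j * l ^ (m - j)`. -/
theorem tendsto_pow_mulVec_of_ker {ι : Type*} [Fintype ι] [DecidableEq ι] (T : Matrix ι ι ℝ)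
    {l : ℝ} (h0 : 0 < l) (h1 : l < 1) (N : ℕ) (v : ι → ℝ)
    (hv : ((T - l • 1) ^ N) *ᵥ v = 0) :
    Tendsto (fun m : ℕ => (T ^ m) *ᵥ v) atTop (𝓝 0) := by
  -- The sum is over the fixed range `N`: terms with `j > m` vanish through the binomial
  -- coefficient, terms with `j ≥ N` through `hv`.
  have key : ∀ m : ℕ, (T ^ m) *ᵥ v =
      ∑ j ∈ Finset.range N, ((m.choose j : ℝ) * l ^ (m - j)) • ((T - l • 1) ^ j *ᵥ v) := by
    intro m
    have hc : Commute (T - l • (1 : Matrix ι ι ℝ)) (l • 1) := (Commute.one_right _).smul_right l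
    have hbig : ∀ j, N ≤ j → (T - l • 1) ^ j *ᵥ v = 0 := by
      intro j hj
      rw [← Nat.sub_add_cancel hj, pow_add, ← mulVec_mulVec, hv, mulVec_zero]
    have e1 : (T ^ m) *ᵥ v = ∑ j ∈ Finset.range (m + 1),
        ((m.choose j : ℝ) * l ^ (m - j)) • ((T - l • 1) ^ j *ᵥ v) := by
      conv_lhs => rw [← sub_add_cancel T (l • (1 : Matrix ι ι ℝ)), hc.add_pow]
      rw [sum_mulVec]
      refine Finset.sum_congr rfl fun j _ => ?_
      rw [smul_pow, one_pow, mul_smul_comm, mul_one, ← nsmul_eq_mul', ← Nat.cast_smul_eq_nsmul ℝ,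
        smul_smul, smul_mulVec]
    rw [e1]
    rcases le_total (m + 1) N with h | h
    · refine Finset.sum_subset (Finset.range_mono h) fun j _ hj => ?_
      rw [Nat.choose_eq_zero_of_lt (by simpa using hj)]; simp
    · refine (Finset.sum_subset (Finset.range_mono h) fun j _ hj => ?_).symm
      rw [hbig j (by simpa using hj), smul_zero]
  simp_rw [key]
  rw [← Finset.sum_const_zero (ι := ℕ) (s := Finset.range N)]
  refine tendsto_finsetSum _ fun j _ => ?_
  simpa using (tendsto_choose_mul_pow h0 h1 j).smul_const ((T - l • 1) ^ j *ᵥ v)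

theorem tendsto_pow_mulVec_of_mem_iSup {ι κ : Type*} [Fintype ι] [DecidableEq ι]
    (T : Matrix ι ι ℝ) (l : κ → ℝ) (h : ∀ x, 0 < l x ∧ l x < 1) (N : ℕ) {v : ι → ℝ}
    (hv : v ∈ ⨆ x, LinearMap.ker (Matrix.toLin' ((T - l x • 1) ^ N))) :
    Tendsto (fun m : ℕ => (T ^ m) *ᵥ v) atTop (𝓝 0) := by
  induction hv using Submodule.iSup_induction' with
  | mem x v hv =>
    exact tendsto_pow_mulVec_of_ker T (h x).1 (h x).2 N v hv
  | zero => simp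
  | add v w _ _ hv hw => simpa [mulVec_add] using hv.add hw

/-- A generalized eigenvector of `T` for `l` is one of `T⁻¹` for `l⁻¹`, because
`T⁻¹ - l⁻¹ = -l⁻¹ T⁻¹ (T - l)`. -/
theorem ker_le_ker_inv {ι : Type*} [Fintype ι] [DecidableEq ι] (T : Matrix ι ι ℝ)
    (hT : IsUnit T.det) {l : ℝ} (hl : l ≠ 0) (N : ℕ) :
    LinearMap.ker (Matrix.toLin' ((T - l • 1) ^ N)) ≤
      LinearMap.ker (Matrix.toLin' ((T⁻¹ - l⁻¹ • 1) ^ N)) := by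
  intro v hv
  have e : T⁻¹ - l⁻¹ • 1 = (-l⁻¹ • T⁻¹) * (T - l • 1) := by
    rw [smul_mul_assoc, mul_sub, nonsing_inv_mul _ hT, mul_smul_comm, mul_one, smul_sub, smul_smul]
    simp [hl]
    abel
  have hc : Commute (-l⁻¹ • T⁻¹) (T - l • 1) := by
    refine Commute.smul_left (Commute.sub_right ?_ ((Commute.one_right _).smul_right l)) _
    rw [Commute, SemiconjBy, nonsing_inv_mul _ hT, mul_nonsing_inv _ hT]
  have hv' : (T - l • 1) ^ N *ᵥ v = 0 := hv
  change (T⁻¹ - l⁻¹ • 1) ^ N *ᵥ v = 0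
  rw [e, hc.mul_pow, ← mulVec_mulVec, hv', mulVec_zero]

theorem mulVec_mem_iSup_ker {ι κ : Type*} [Fintype ι] [DecidableEq ι]
    (S T : Matrix ι ι ℝ) (h : Commute S T) (l : κ → ℝ) (N : ℕ) {v : ι → ℝ}
    (hv : v ∈ ⨆ x, LinearMap.ker (Matrix.toLin' ((T - l x • 1) ^ N))) :
    S *ᵥ v ∈ ⨆ x, LinearMap.ker (Matrix.toLin' ((T - l x • 1) ^ N)) := by
  induction hv using Submodule.iSup_induction' with
  | mem x v hv =>
    refine Submodule.mem_iSup_of_mem x ?_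
    have hv' : (T - l x • 1) ^ N *ᵥ v = 0 := hv
    have hc : Commute S ((T - l x • 1) ^ N) :=
      (h.sub_right ((Commute.one_right _).smul_right _)).pow_right N
    change (T - l x • 1) ^ N *ᵥ (S *ᵥ v) = 0
    rw [mulVec_mulVec, ← hc.eq, ← mulVec_mulVec, hv', mulVec_zero]
  | zero => simp
  | add v w _ _ hv hw => rw [mulVec_add]; exact add_mem hv hw

/-- The projection onto `U'` along `U`, as a matrix `P`: it commutes with `S` since both subspaces
are `S`-invariant, and `S ^ m * P → 0` since the powers of `S` tend to zero on `U'`. -/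
theorem exists_commuting_matrix {ι : Type*} [Fintype ι] [DecidableEq ι]
    (S : Matrix ι ι ℝ) (U U' : Submodule ℝ (ι → ℝ)) (hU : IsCompl U U')
    (hSU : ∀ v ∈ U, S *ᵥ v ∈ U) (hSU' : ∀ v ∈ U', S *ᵥ v ∈ U')
    (hlim : ∀ v ∈ U', Tendsto (fun m : ℕ => (S ^ m) *ᵥ v) atTop (𝓝 0)) :
    ∃ P : Matrix ι ι ℝ, Commute P S ∧ (∀ v, P *ᵥ v = 0 → v ∈ U) ∧
      Tendsto (fun m : ℕ => S ^ m * P) atTop (𝓝 0) := by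
  set p : (ι → ℝ) →ₗ[ℝ] (ι → ℝ) := U'.projection U hU.symm
  have hpv : ∀ v, LinearMap.toMatrix' p *ᵥ v = p v := fun v => by
    rw [← Matrix.toLin'_apply, Matrix.toLin'_toMatrix']
  have hp0 : ∀ v ∈ U, p v = 0 := fun v hv =>
    (Submodule.projection_apply_eq_zero_iff hU.symm).2 hv
  have hp1 : ∀ v ∈ U', p v = v := fun v hv =>
    Submodule.projection_apply_left hU.symm ⟨v, hv⟩
  refine ⟨LinearMap.toMatrix' p, ?_, fun v hv => ?_, ?_⟩
  · refine Matrix.toLin'.injective (LinearMap.ext fun v => ?_)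
    simp only [Matrix.toLin'_apply, ← mulVec_mulVec, hpv]
    obtain ⟨u, hu, u', hu', rfl⟩ := Submodule.mem_sup.1 (hU.sup_eq_top ▸ Submodule.mem_top (x := v))
    rw [mulVec_add, map_add, map_add, hp0 _ (hSU u hu), hp1 _ (hSU' u' hu'), hp0 u hu, hp1 u' hu']
    simp
  · rw [hpv] at hv
    exact (Submodule.projection_apply_eq_zero_iff hU.symm).1 hv
  · refine tendsto_pi_nhds.2 fun a => tendsto_pi_nhds.2 fun b => ?_
    have hb : p (Pi.single b 1) ∈ U' := Submodule.projection_apply_mem hU.symm _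
    have := tendsto_pi_nhds.1 (hlim _ hb) a
    refine this.congr fun m => ?_
    rw [← hpv, mulVec_mulVec, mulVec_single_one]
    rfl

theorem exists_combination_eq_one {ι : Type*} [Fintype ι] [DecidableEq ι]
    (P₁ P₂ : Matrix ι ι ℝ) (h : ∀ v, P₁ *ᵥ v = 0 → P₂ *ᵥ v = 0 → v = 0) :
    ∃ Q₁ Q₂ : Matrix ι ι ℝ, Q₁ * P₁ + Q₂ * P₂ = 1 := by
  -- A left inverse `g` of the injective map `v ↦ (P₁ v, P₂ v)`, split into its two components.
  obtain ⟨g, hg⟩ := LinearMap.exists_leftInverse_of_injective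
    ((Matrix.toLin' P₁).prod (Matrix.toLin' P₂)) (by
      rw [LinearMap.ker_eq_bot']
      intro v hv
      exact h v (congrArg Prod.fst hv) (congrArg Prod.snd hv))
  refine ⟨LinearMap.toMatrix' (g ∘ₗ LinearMap.inl ℝ _ _),
    LinearMap.toMatrix' (g ∘ₗ LinearMap.inr ℝ _ _), ?_⟩
  refine Matrix.toLin'.injective (LinearMap.ext fun v => ?_)
  have hgv : g (P₁ *ᵥ v, P₂ *ᵥ v) = v := LinearMap.congr_fun hg v
  rw [map_add, Matrix.toLin'_mul, Matrix.toLin'_mul, Matrix.toLin'_toMatrix',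
    Matrix.toLin'_toMatrix', Matrix.toLin'_one]
  change g (P₁ *ᵥ v, 0) + g (0, P₂ *ᵥ v) = v
  rw [← map_add, Prod.mk_add_mk, add_zero, zero_add, hgv]

open scoped MatrixOrder Matrix.Norms.L2Operator in
theorem exists_eq_mul_transpose {ι : Type*} [Fintype ι] [DecidableEq ι] {W : Matrix ι ι ℝ}
    (hW : W.PosDef) : ∃ R : Matrix ι ι ℝ, W = R * Rᵀ := by
  obtain ⟨R, hR⟩ := CStarAlgebra.nonneg_iff_eq_star_mul_self.mp hW.posSemidef.nonneg
  refine ⟨Rᵀ, ?_⟩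
  rw [hR, transpose_transpose, star_eq_conjTranspose, conjTranspose_eq_transpose_of_trivial]

section Frobenius

attribute [local instance] Matrix.frobeniusNormedRing

/-- The bisector equation for `W = R * Rᵀ` as an equality of Frobenius norms, via
`trace (X * Xᵀ) = ‖X‖ ^ 2`. -/
theorem frobenius_norm_eq_of_trace_eq {ι : Type*} [Fintype ι] [DecidableEq ι]
    (C R : Matrix ι ι ℝ) (h : (Cᵀ * C * (R * Rᵀ)).trace = (R * Rᵀ).trace) : ‖C * R‖ = ‖R‖ := by
  have f : ∀ X : Matrix ι ι ℝ, (X * Xᵀ).trace = ∑ i, ∑ j, ‖X i j‖ ^ (2 : ℝ) := by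
    intro X
    simp [Matrix.trace, Matrix.mul_apply, sq]
  have e : (Cᵀ * C * (R * Rᵀ)).trace = ((C * R) * (C * R)ᵀ).trace := by
    rw [transpose_mul, Matrix.mul_assoc, trace_mul_comm]
    simp only [Matrix.mul_assoc]
  rw [frobenius_norm_def, frobenius_norm_def, ← f, ← f, ← e, h]

/-- If `E₁ * C₁ + E₂ * C₂ = 1` with `E₁`, `E₂` of Frobenius norm less than `1 / 2`, the bisectors
defined by `C₁ᵀ * C₁` and `C₂ᵀ * C₂` have no common positive definite point. -/
theorem no_common_point {ι : Type*} [Fintype ι] [DecidableEq ι] [Nonempty ι]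
    (E₁ E₂ C₁ C₂ W : Matrix ι ι ℝ) (hE : E₁ * C₁ + E₂ * C₂ = 1)
    (h₁ : ‖E₁‖ < 1 / 2) (h₂ : ‖E₂‖ < 1 / 2) (hW : W.PosDef)
    (t₁ : (C₁ᵀ * C₁ * W).trace = W.trace) (t₂ : (C₂ᵀ * C₂ * W).trace = W.trace) : False := by
  obtain ⟨R, rfl⟩ := exists_eq_mul_transpose hW
  have n₁ := frobenius_norm_eq_of_trace_eq C₁ R t₁
  have n₂ := frobenius_norm_eq_of_trace_eq C₂ R t₂
  have hR : 0 < ‖R‖ := by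
    rw [norm_pos_iff]
    rintro rfl
    have := hW.trace_pos
    simp at this
  have e : R = E₁ * (C₁ * R) + E₂ * (C₂ * R) := by
    rw [← Matrix.mul_assoc, ← Matrix.mul_assoc, ← Matrix.add_mul, hE, Matrix.one_mul]
  have b : ‖R‖ ≤ ‖E₁‖ * ‖R‖ + ‖E₂‖ * ‖R‖ := by
    calc ‖R‖ = ‖E₁ * (C₁ * R) + E₂ * (C₂ * R)‖ := by rw [← e]
      _ ≤ ‖E₁ * (C₁ * R)‖ + ‖E₂ * (C₂ * R)‖ := norm_add_le _ _
      _ ≤ ‖E₁‖ * ‖C₁ * R‖ + ‖E₂‖ * ‖C₂ * R‖ := add_le_add (norm_mul_le _ _) (norm_mul_le _ _)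
      _ = _ := by rw [n₁, n₂]
  nlinarith

/-- Disjointness of the bisectors of two labels for all large exponents, the two exponents being
independent of each other. -/
theorem exists_bound {ι : Type*} [Fintype ι] [DecidableEq ι] [Nonempty ι]
    (S₁ S₂ P₁ P₂ : Matrix ι ι ℝ) (hS₁ : IsUnit S₁.det) (hS₂ : IsUnit S₂.det)
    (hc₁ : Commute P₁ S₁) (hc₂ : Commute P₂ S₂)
    (l₁ : Tendsto (fun m : ℕ => S₁ ^ m * P₁) atTop (𝓝 0))
    (l₂ : Tendsto (fun m : ℕ => S₂ ^ m * P₂) atTop (𝓝 0))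
    (h : ∀ v, P₁ *ᵥ v = 0 → P₂ *ᵥ v = 0 → v = 0) :
    ∃ M : ℕ, ∀ a b : ℕ, M ≤ a → M ≤ b → ∀ W : Matrix ι ι ℝ, W.PosDef →
      (((S₁⁻¹ ^ a)ᵀ * S₁⁻¹ ^ a) * W).trace = W.trace →
      (((S₂⁻¹ ^ b)ᵀ * S₂⁻¹ ^ b) * W).trace = W.trace → False := by
  obtain ⟨Q₁, Q₂, hQ⟩ := exists_combination_eq_one P₁ P₂ h
  have small : ∀ (Q : Matrix ι ι ℝ) (F : ℕ → Matrix ι ι ℝ), Tendsto F atTop (𝓝 0) →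
      ∀ᶠ m in atTop, ‖Q * F m‖ < 1 / 2 := by
    intro Q F hF
    have h1 : Tendsto (fun m => ‖Q * F m‖) atTop (𝓝 0) := by
      simpa using (hF.const_mul Q).norm
    exact h1.eventually_lt_const (by norm_num)
  obtain ⟨M, hM⟩ := eventually_atTop.1 ((small Q₁ _ l₁).and (small Q₂ _ l₂))
  -- `P = (S ^ m * P) * S⁻¹ ^ m` is what turns smallness of `S ^ m * P` into expansion by `S⁻¹ ^ m`.
  have cancel : ∀ (S P : Matrix ι ι ℝ), IsUnit S.det → Commute P S → ∀ m : ℕ,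
      S ^ m * P * S⁻¹ ^ m = P := by
    intro S P hS hc m
    rw [← (hc.pow_right m).eq, Matrix.mul_assoc, Matrix.inv_pow', mul_nonsing_inv, Matrix.mul_one]
    rw [det_pow]; exact hS.pow m
  refine ⟨M, fun a b ha hb W hW t₁ t₂ => ?_⟩
  refine no_common_point (Q₁ * (S₁ ^ a * P₁)) (Q₂ * (S₂ ^ b * P₂)) _ _ W ?_
    (hM a ha).1 (hM b hb).2 hW t₁ t₂
  rw [Matrix.mul_assoc Q₁, Matrix.mul_assoc Q₂, cancel _ _ hS₁ hc₁, cancel _ _ hS₂ hc₂, hQ]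

end Frobenius



/-- Schottky configuration in `SL(2n,ℝ)`: if `A_1, …, A_k ∈ SL(2n,ℝ)`
have only real positive eigenvalues different from 1, with `n`-dimensional attracting
and repulsing subspaces `V_i⁺`, `V_i⁻` (sums of generalized eigenspaces of `A_iᵀ` over
eigenvalues `> 1`, resp. in `(0,1)`) that pairwise intersect trivially, then there is
`M > 0` such that for all exponents `≥ M` the `2k` Selberg bisectors
`Bis(I, A_i^{m_i⁺}.I)`, `Bis(I, A_i^{-m_i⁻}.I)` in `𝒫(2n)` are pairwise disjoint. -/
theorem schottky_bisectors_pairwise_disjoint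
    (n k : ℕ) (hn : 1 ≤ n) (hk : 1 ≤ k)
    (A : Fin k → Matrix (Fin (2 * n)) (Fin (2 * n)) ℝ)
    (hdet : ∀ i, (A i).det = 1)
    (heig : ∀ i, ∀ z : ℂ,
      (((A i).map (Complex.ofReal)) - z • 1).det = 0 →
        z.im = 0 ∧ 0 < z.re ∧ z ≠ 1)
    (V : Fin k → Bool → Submodule ℝ (Fin (2 * n) → ℝ))
    (hVp : ∀ i, V i true = ⨆ l : {l : ℝ // 1 < l},
      LinearMap.ker (Matrix.toLin' (((A i)ᵀ - (l : ℝ) • 1) ^ (2 * n))))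
    (hVm : ∀ i, V i false = ⨆ l : {l : ℝ // 0 < l ∧ l < 1},
      LinearMap.ker (Matrix.toLin' (((A i)ᵀ - (l : ℝ) • 1) ^ (2 * n))))
    (hdim : ∀ i b, Module.finrank ℝ (V i b) = n)
    (htriv : ∀ i b j c, (i, b) ≠ (j, c) → V i b ⊓ V j c = ⊥) :
    ∃ M : ℕ, 0 < M ∧
      ∀ mp mm : Fin k → ℕ, (∀ i, M ≤ mp i) → (∀ i, M ≤ mm i) →
        ∀ (Bm : Fin k → Bool → Matrix (Fin (2 * n)) (Fin (2 * n)) ℝ),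
          (∀ i, Bm i true = (A i) ^ (mp i)) →
          (∀ i, Bm i false = ((A i)⁻¹) ^ (mm i)) →
          ∀ i b j c, (i, b) ≠ (j, c) →
            ¬∃ W : Matrix (Fin (2 * n)) (Fin (2 * n)) ℝ,
              (W.PosDef ∧ W.det = 1) ∧
              ((((Bm i b)ᵀ * 1 * (Bm i b))⁻¹ * W).trace = ((1 : Matrix (Fin (2 * n)) (Fin (2 * n)) ℝ)⁻¹ * W).trace) ∧
              ((((Bm j c)ᵀ * 1 * (Bm j c))⁻¹ * W).trace = ((1 : Matrix (Fin (2 * n)) (Fin (2 * n)) ℝ)⁻¹ * W).trace) := by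
  have : Nonempty (Fin (2 * n)) := ⟨⟨0, by omega⟩⟩
  have hTdet : ∀ i, IsUnit ((A i)ᵀ).det := fun i => by simp [hdet i]
  have hTT : ∀ i, Commute ((A i)ᵀ)⁻¹ (A i)ᵀ := fun i => by
    rw [Commute, SemiconjBy, nonsing_inv_mul _ (hTdet i), mul_nonsing_inv _ (hTdet i)]
  set S : Fin k → Bool → Matrix (Fin (2 * n)) (Fin (2 * n)) ℝ :=
    fun i b => bif b then (A i)ᵀ else ((A i)ᵀ)⁻¹ with hS
  have hSdet : ∀ i b, IsUnit (S i b).det := by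
    rintro i (_ | _)
    · exact isUnit_nonsing_inv_det _ (hTdet i)
    · exact hTdet i
  have hSc : ∀ i b, Commute (S i b) (A i)ᵀ := by
    rintro i (_ | _)
    · exact hTT i
    · exact Commute.refl _
  have hinv : ∀ i b c, ∀ v ∈ V i c, S i b *ᵥ v ∈ V i c := by
    rintro i b (_ | _) v hv
    · rw [hVm] at hv ⊢
      exact mulVec_mem_iSup_ker _ _ (hSc i b) _ _ hv
    · rw [hVp] at hv ⊢
      exact mulVec_mem_iSup_ker _ _ (hSc i b) _ _ hv
  have hlim : ∀ i b, ∀ v ∈ V i (!b),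
      Tendsto (fun m : ℕ => (S i b ^ m) *ᵥ v) atTop (𝓝 0) := by
    rintro i (_ | _) v hv
    · simp only [Bool.not_false, hVp] at hv
      refine tendsto_pow_mulVec_of_mem_iSup ((A i)ᵀ)⁻¹
        (fun x : {l : ℝ // 1 < l} => (x : ℝ)⁻¹) (fun x => ?_) (2 * n)
        (iSup_mono (fun x => ker_le_ker_inv _ (hTdet i) ?_ (2 * n)) hv)
      · exact ⟨inv_pos.2 (zero_lt_one.trans x.2), inv_lt_one_of_one_lt₀ x.2⟩
      · exact (zero_lt_one.trans x.2).ne'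
    · simp only [Bool.not_true, hVm] at hv
      exact tendsto_pow_mulVec_of_mem_iSup _ _ (fun x => x.2) _ hv
  have hcompl : ∀ i b, IsCompl (V i b) (V i (!b)) := by
    intro i b
    refine Submodule.isCompl_iff_disjoint _ _ ?_ |>.2 (disjoint_iff.2 (htriv _ _ _ _ (by simp)))
    simp [hdim]; omega
  choose P hPc hPker hPlim using fun i b =>
    exists_commuting_matrix (S i b) (V i b) (V i (!b)) (hcompl i b) (hinv i b b)
      (hinv i b (!b)) (hlim i b)
  -- For equal labels any threshold will do; this keeps `M` a total function for `Finset.sup`.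
  have hpair : ∀ x : (Fin k × Bool) × (Fin k × Bool), ∃ M : ℕ, x.1 ≠ x.2 →
      ∀ a b : ℕ, M ≤ a → M ≤ b → ∀ W : Matrix (Fin (2 * n)) (Fin (2 * n)) ℝ, W.PosDef →
      ((((S x.1.1 x.1.2)⁻¹ ^ a)ᵀ * (S x.1.1 x.1.2)⁻¹ ^ a) * W).trace = W.trace →
      ((((S x.2.1 x.2.2)⁻¹ ^ b)ᵀ * (S x.2.1 x.2.2)⁻¹ ^ b) * W).trace = W.trace → False := by
    rintro ⟨⟨i, b⟩, j, c⟩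
    by_cases hne : (i, b) = (j, c)
    · exact ⟨0, fun h => (h hne).elim⟩
    obtain ⟨M, hM⟩ := exists_bound (S i b) (S j c) (P i b) (P j c) (hSdet i b) (hSdet j c)
      (hPc i b) (hPc j c) (hPlim i b) (hPlim j c) (fun v h1 h2 => by
        have : v ∈ V i b ⊓ V j c := ⟨hPker i b v h1, hPker j c v h2⟩
        rwa [htriv i b j c hne, Submodule.mem_bot] at this)
    exact ⟨M, fun _ => hM⟩
  choose M hM using hpair
  refine ⟨Finset.univ.sup M + 1, Nat.succ_pos _, ?_⟩
  rintro mp mm hmp hmm Bm hBp hBm i b j c hne ⟨W, ⟨hW, -⟩, t₁, t₂⟩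
  set e : Fin k → Bool → ℕ := fun i b => bif b then mp i else mm i with he
  have hle : ∀ x i b, M x ≤ e i b := by
    rintro x i b
    have h := Finset.le_sup (f := M) (Finset.mem_univ x)
    cases b
    · exact (h.trans (Nat.le_succ _)).trans (hmm i)
    · exact (h.trans (Nat.le_succ _)).trans (hmp i)
  have hform : ∀ i b, ((Bm i b)ᵀ * 1 * Bm i b)⁻¹ =
      ((S i b)⁻¹ ^ e i b)ᵀ * (S i b)⁻¹ ^ e i b := by
    intro i b
    have hB : (S i b)⁻¹ ^ e i b = ((Bm i b)ᵀ)⁻¹ := by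
      cases b
      · simp [hS, he, hBm, transpose_nonsing_inv, transpose_pow, inv_pow']
      · simp [hS, he, hBp, transpose_pow, inv_pow']
    rw [hB, Matrix.mul_one, Matrix.mul_inv_rev, transpose_nonsing_inv, transpose_transpose]
  rw [hform, inv_one, Matrix.one_mul] at t₁ t₂
  exact hM ((i, b), (j, c)) hne _ _ (hle _ i b) (hle _ j c) W hW t₁ t₂
end
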